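/- Assume r = dim g(−1)₁̄ is odd and e = e_θ is minimal. The center Z(U(g₀,e)) of the minimal finite W-superalgebra U(g₀,e) is generated by the elements Θ′_{h_i} (1 ≤ i ≤ k−1) and C′_θ; moreover the canonical projection Pr₀ : U(g₀) ↠ U(g₀)/(I₀)_χ restricts to an algebra isomorphism from the center Z(U(g₀)) onto Z(U(g₀,e)). -/

import Mathlib

/-!
STATEMENT 15 (Propositions `centerg0e` and `centertocenter` of the paper).

Setup as in Proposition `fiosp`: `g₀ = h^e ⊕ s_θ` with `s_θ ≅ osp(1|2)`
(case `r` odd, `e = e_θ` minimal); `U(g₀)` is encoded as a ℂ-algebra `Ug0`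
with the images `ιh i, ιe, ιH, ιf, ιE, ιF` of the basis of `g₀`, the
super-commutation relations, and the PBW theorem; `(I₀)_χ` is the left ideal
generated by `f − 1`; `(Q₀)_χ = U(g₀)/(I₀)_χ`; `U(g₀,e) = (Q₀)_χ^{ad m₀}`
(the set `Inv`); `Θ′_{h_i}, Θ′_E, C′_θ, Θ′_F` are the cosets of
`yh i = ιh i`, `yE`, `yC`, `yF`.

The center `Z(U(g₀,e))` is encoded as the set `Zcen` of invariant cosets
commuting (via representatives) with every element of `U(g₀,e)`.

Claims: `Z(U(g₀,e))` is generated by the `Θ′_{h_i}` and `C′_θ` — i.e. it is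
the ℂ-span of the monomials `∏Θ′_{h_i}^{t_i}·C′_θ^{t_k}` — and the canonical
projection `Pr₀ : U(g₀) ↠ U(g₀)/(I₀)_χ` restricts to a bijection from the
center `Z(U(g₀))` onto `Z(U(g₀,e))`.
-/
noncomputable section

open scoped BigOperators

/-- The ordered product of a finite family of elements of a ring. -/
def ringProd {A : Type} [Ring A] {n : ℕ} (F : Fin n → A) : A := (List.ofFn F).prod

/-!
The sCasimir `T = 2h + 1 - 4FE` commutes with the even part, anticommutes with `E` and `F`, and
`T² = 8C + 1`, so the Casimir element `C` is central. Put `w = 1_χ` in `Q_χ = U ⧸ U(f - 1)`.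

* `E` acts on a Whittaker vector `v` by `E v = F v - F (F E v)`, and `4FE = 2h + 1 - T`; hence the
  powers of `h` applied to `A w` span `Q_χ`, where `A` is generated by the `h_i`, `T` and `F`. On
  these powers `f - 1` acts like a difference operator, so its kernel `U(g₀, e)` is `A w`.
* Over `S = K[h_i, C]`, `A w` is spanned by `w, Tw, Fw, TFw`. Since `F² = -1` and `TF = -FT` on
  Whittaker vectors, commuting with `F` and with `T` forces a central element into `S w`.
* A central `z = u (f - 1)` has weight `0` for `ad h`; comparing the homogeneous components of `u`,
  only finitely many of which are nonzero, gives `z = 0`. So the centre injects into `Q_χ`.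

The last two points need `F` and `T` to be left regular, which is read off from leading terms in a
PBW basis.
-/

/-! ### The sCasimir and Casimir elements -/

/-- The relations, in an associative algebra `U`, between commuting elements `h i` and the basis
`e, H, f, E, F` of `osp(1|2)`. Only those not formally implied by the others are listed: `E` and `F`
are odd, so `E * E = e` and `F * F = -f` are halves of the super-brackets `[E, E]` and `[F, F]`. -/
structure OspRelations {ι U : Type*} [Ring U] (h : ι → U) (e H f E F : U) : Prop where
  H_E : H * E - E * H = E
  H_F : H * F - F * H = -F
  E_F : E * F + F * E = H
  E_E : E * E = e
  F_F : F * F = -f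
  h_E (i : ι) : Commute (h i) E
  h_F (i : ι) : Commute (h i) F
  h_h (i j : ι) : Commute (h i) (h j)

/-- The sCasimir (ghost centre element) of `osp(1|2)`: it commutes with even elements, anticommutes
with odd ones, and is a square root of the Casimir element up to affine normalization. -/
def sCasimir {U : Type*} [Ring U] (H E F : U) : U := 2 * H + 1 - 4 * (F * E)

/-- The quadratic Casimir element of `osp(1|2)`, with the normalization of `C′_θ`. -/
def casimir (K : Type*) [Field K] {U : Type*} [Ring U] [Algebra K U] (e H f E F : U) : U :=
  (2 : K) • (e * f) + (1 / 2 : K) • (H * H) - (3 / 2 : K) • H + F * E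

namespace OspRelations

section Ring

variable {ι U : Type*} [Ring U] {h : ι → U} {e H f E F : U}

theorem H_mul_E (R : OspRelations h e H f E F) : H * E = E * H + E :=
  eq_add_of_sub_eq' R.H_E

theorem H_mul_F (R : OspRelations h e H f E F) : H * F = F * H - F := by
  rw [sub_eq_add_neg]; exact eq_add_of_sub_eq' R.H_F

theorem E_mul_F (R : OspRelations h e H f E F) : E * F = H - F * E :=
  eq_sub_of_add_eq R.E_F

theorem f_eq_neg (R : OspRelations h e H f E F) : f = -(F * F) := by rw [R.F_F, neg_neg]

theorem f_mul_F (R : OspRelations h e H f E F) : f * F = F * f := by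
  rw [R.f_eq_neg]; noncomm_ring

theorem f_mul_E (R : OspRelations h e H f E F) : f * E = E * f - F := by
  have hF := R.H_mul_F
  have hEF := R.E_mul_F
  rw [R.f_eq_neg]
  linear_combination (norm := noncomm_ring) - F * hEF + hEF * F + hF

theorem f_mul_H (R : OspRelations h e H f E F) : f * H = (H + 2) * f := by
  have hF := R.H_mul_F
  rw [R.f_eq_neg]
  linear_combination (norm := noncomm_ring) hF * F + F * hF

theorem sCasimir_mul_F (R : OspRelations h e H f E F) :
    sCasimir H E F * F = -(F * sCasimir H E F) := by
  have hF := R.H_mul_F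
  have hEF := R.E_mul_F
  rw [sCasimir]
  linear_combination (norm := noncomm_ring) 2 * hF - 4 * (F * hEF)

theorem sCasimir_mul_E (R : OspRelations h e H f E F) :
    sCasimir H E F * E = -(E * sCasimir H E F) := by
  have hE := R.H_mul_E
  have hEF := R.E_mul_F
  rw [sCasimir]
  linear_combination (norm := noncomm_ring) -2 * hE - 4 * (hEF * E)

theorem commute_sCasimir_f (R : OspRelations h e H f E F) : Commute (sCasimir H E F) f := by
  have hT := R.sCasimir_mul_F
  rw [Commute, SemiconjBy, R.f_eq_neg]
  linear_combination (norm := noncomm_ring) - hT * F + F * hT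

theorem commute_h_H (R : OspRelations h e H f E F) (i : ι) : Commute (h i) H := by
  rw [← R.E_F]
  exact ((R.h_E i).mul_right (R.h_F i)).add_right ((R.h_F i).mul_right (R.h_E i))

theorem commute_h_sCasimir (R : OspRelations h e H f E F) (i : ι) :
    Commute (h i) (sCasimir H E F) :=
  (((Nat.cast_commute 2 _).symm.mul_right (R.commute_h_H i)).add_right (.one_right _)).sub_right
    ((Nat.cast_commute 4 _).symm.mul_right ((R.h_F i).mul_right (R.h_E i)))

end Ring

section Algebra

variable {K ι U : Type*} [Field K] [Ring U] [Algebra K U] {h : ι → U} {e H f E F : U}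

theorem mem_center (R : OspRelations h e H f E F)
    (hgen : Algebra.adjoin K (Set.range h ∪ {E, F}) = ⊤) {z : U} (hh : ∀ i, Commute (h i) z)
    (hE : Commute E z) (hF : Commute F z) : z ∈ Subalgebra.center K U := by
  have hz : z ∈ Subalgebra.centralizer K (Set.range h ∪ {E, F}) := by
    rintro _ (⟨i, rfl⟩ | rfl | rfl)
    exacts [hh i, hE, hF]
  refine Subalgebra.mem_center_iff.2 fun u => ?_
  have hu := Algebra.adjoin_le_centralizer_centralizer K _ (hgen ▸ Algebra.mem_top : u ∈ _)
  exact (hu z hz).symm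

theorem h_mem_center (R : OspRelations h e H f E F)
    (hgen : Algebra.adjoin K (Set.range h ∪ {E, F}) = ⊤) (i : ι) :
    h i ∈ Subalgebra.center K U :=
  R.mem_center hgen (fun j => R.h_h j i) (R.h_E i).symm (R.h_F i).symm

variable [CharZero K]

theorem sCasimir_sq (R : OspRelations h e H f E F) :
    sCasimir H E F * sCasimir H E F = (8 : K) • casimir K e H f E F + 1 := by
  have hE := R.H_mul_E
  have hF := R.H_mul_F
  have hEF := R.E_mul_F
  have h8 : (8 : K) • casimir K e H f E F =
      16 * (e * f) + 4 * (H * H) - 12 * H + 8 * (F * E) := by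
    simp only [casimir, smul_add, smul_sub, smul_smul]
    norm_num [ofNat_smul_eq_nsmul, nsmul_eq_mul]
  rw [h8, R.f_eq_neg, ← R.E_E, sCasimir]
  linear_combination (norm := noncomm_ring) 16 * (E * hEF * F) + 16 * (E * hF)
    + 16 * (hEF * H) - 16 * hEF - 16 * (hEF * (E * F)) - 16 * ((H - F * E) * hEF)
    + 8 * (hF * E) + 8 * (F * hE)

theorem casimir_eq (R : OspRelations h e H f E F) :
    casimir K e H f E F = (8 : K)⁻¹ • (sCasimir H E F * sCasimir H E F - 1) := by
  rw [R.sCasimir_sq (K := K), add_sub_cancel_right, inv_smul_smul₀ (by norm_num)]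

theorem casimir_mem_center (R : OspRelations h e H f E F)
    (hgen : Algebra.adjoin K (Set.range h ∪ {E, F}) = ⊤) :
    casimir K e H f E F ∈ Subalgebra.center K U := by
  have commute_sq {x : U} (hx : sCasimir H E F * x = -(x * sCasimir H E F)) :
      Commute x (sCasimir H E F * sCasimir H E F) := by
    rw [Commute, SemiconjBy]
    linear_combination (norm := noncomm_ring) hx * sCasimir H E F - sCasimir H E F * hx
  rw [R.casimir_eq]
  refine Subalgebra.smul_mem _ (sub_mem ?_ (one_mem _)) _
  exact R.mem_center hgen
    (fun i => (R.commute_h_sCasimir i).mul_right (R.commute_h_sCasimir i))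
    (commute_sq R.sCasimir_mul_E) (commute_sq R.sCasimir_mul_F)

end Algebra

end OspRelations

/-! ### Central elements of a left ideal generated by `f - 1` -/

section Graded

open DirectSum

variable {ι A σ : Type*} [AddCommGroup ι] [DecidableEq ι] [Ring A] [SetLike σ A]
  [AddSubgroupClass σ A] (𝒜 : ι → σ) [GradedRing 𝒜] {d n : ι} {f z u : A}

theorem exists_decompose_eq_zero (a : A) {g : ℕ → ι} (hg : g.Injective) :
    ∃ j, (decompose 𝒜 a (g j) : A) = 0 := by
  have hfin : {j | decompose 𝒜 a (g j) ≠ 0}.Finite :=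
    (DFinsupp.finite_support (decompose 𝒜 a)).preimage hg.injOn
  obtain ⟨j, hj⟩ := hfin.infinite_compl.nonempty
  exact ⟨j, by simpa using hj⟩

theorem decompose_add_nsmul_of_eq_mul_sub_one (hf : f ∈ 𝒜 d) (hz : z ∈ 𝒜 n)
    (hu : z = u * (f - 1)) (k : ι) (j : ℕ) (hk : ∀ i < j, k + (i + 1) • d ≠ n) :
    (decompose 𝒜 u (k + j • d) : A) = decompose 𝒜 u k * f ^ j := by
  induction j with
  | zero => rw [zero_nsmul, add_zero, pow_zero, mul_one]
  | succ j ih =>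
    have huf : u * f = u + z := by rw [hu]; noncomm_ring
    rw [pow_succ, ← mul_assoc, ← ih fun i hi => hk i (hi.trans j.lt_succ_self),
      ← coe_decompose_mul_add_of_right_mem 𝒜 hf, huf, decompose_add, DirectSum.add_apply,
      add_assoc, ← succ_nsmul, AddMemClass.coe_add,
      decompose_of_mem_ne 𝒜 hz (hk j j.lt_succ_self).symm, add_zero]

theorem eq_zero_of_eq_mul_sub_one (hd : ¬IsOfFinAddOrder d) (hf : f ∈ 𝒜 d) (hz : z ∈ 𝒜 n)
    (hreg : IsLeftRegular f) (hcomm : Commute f z) (hu : z = u * (f - 1)) : z = 0 := by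
  have hinj : Function.Injective fun j : ℕ => j • d := injective_nsmul_iff_not_isOfFinAddOrder.2 hd
  have below : (decompose 𝒜 u (n - d) : A) = 0 := by
    obtain ⟨j, hj⟩ := exists_decompose_eq_zero 𝒜 u (g := fun j => n - (j + 1) • d)
      ((sub_right_injective).comp (hinj.comp (add_left_injective 1)))
    have h := decompose_add_nsmul_of_eq_mul_sub_one 𝒜 hf hz hu (n - (j + 1) • d) j
      fun i hi hn => hi.ne <| by
        rw [sub_add_eq_add_sub, sub_eq_iff_eq_add, add_right_inj] at hn
        exact Nat.succ_injective (hinj hn)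
    rwa [hj, zero_mul, show n - (j + 1) • d + j • d = n - d by rw [succ_nsmul]; abel] at h
  have at_n : z = -decompose 𝒜 u n := by
    calc z = decompose 𝒜 z n := (decompose_of_mem_same 𝒜 hz).symm
      _ = decompose 𝒜 (u * f) (n - d + d) - decompose 𝒜 u n := by
        rw [sub_add_cancel, ← AddSubgroupClass.coe_sub, ← DirectSum.sub_apply, ← decompose_sub, hu]
        noncomm_ring
      _ = -decompose 𝒜 u n := by
        rw [coe_decompose_mul_add_of_right_mem 𝒜 hf, below, zero_mul, zero_sub]
  obtain ⟨j, hj⟩ := exists_decompose_eq_zero 𝒜 u (g := fun j => n + j • d)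
    ((add_right_injective n).comp hinj)
  have above := decompose_add_nsmul_of_eq_mul_sub_one 𝒜 hf hz hu n j fun i _ hn =>
    i.succ_ne_zero (hinj (by simpa using hn))
  have hzf : f ^ j * z = f ^ j * 0 := by
    rw [(hcomm.pow_left j).eq, at_n, neg_mul, ← above, hj, neg_zero, mul_zero]
  exact hreg.pow j hzf

end Graded

section AdWeight

variable (K : Type*) {A : Type*} [Field K] [Ring A] [Algebra K A] (a : A)

/-- The elements of weight `k` under the inner derivation `x ↦ a * x - x * a`. -/
def adWeightSpace (k : K) : Submodule K A :=
  Module.End.eigenspace (LinearMap.mulLeft K a - LinearMap.mulRight K a) k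

variable {K a}

theorem mem_adWeightSpace {k : K} {x : A} : x ∈ adWeightSpace K a k ↔ a * x - x * a = k • x :=
  Module.End.mem_eigenspace_iff

variable (K a)

instance adWeightSpace.gradedMonoid : SetLike.GradedMonoid (adWeightSpace K a) where
  one_mem := by simp [mem_adWeightSpace]
  mul_mem k l x y hx hy := by
    rw [mem_adWeightSpace] at hx hy ⊢
    calc a * (x * y) - x * y * a = (a * x - x * a) * y + x * (a * y - y * a) := by noncomm_ring
      _ = (k + l) • (x * y) := by rw [hx, hy, smul_mul_assoc, mul_smul_comm, add_smul]

variable {K a}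

theorem adWeightSpace_isInternal [DecidableEq K] {s : Set A} (hs : Algebra.adjoin K s = ⊤)
    (hweight : ∀ x ∈ s, ∃ k, x ∈ adWeightSpace K a k) :
    DirectSum.IsInternal (adWeightSpace K a) := by
  refine DirectSum.isInternal_submodule_of_iSupIndep_of_iSup_eq_top
    (Module.End.eigenspaces_iSupIndep _) ?_
  rw [Submodule.iSup_eq_toSubmodule_range, ← Algebra.top_toSubmodule, ← hs]
  refine le_antisymm (by rw [hs]; exact le_top) (Algebra.adjoin_le ?_)
  rintro x hx
  obtain ⟨k, hk⟩ := hweight x hx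
  exact ⟨.of (fun k => adWeightSpace K a k) k ⟨x, hk⟩, DirectSum.coeAlgHom_of _ _ _⟩

theorem eq_zero_of_mem_center_of_eq_mul_sub_one [CharZero K] {s : Set A}
    (hs : Algebra.adjoin K s = ⊤) (hweight : ∀ x ∈ s, ∃ k, x ∈ adWeightSpace K a k)
    {f z u : A} {k : K} (hk : k ≠ 0) (hf : f ∈ adWeightSpace K a k) (hreg : IsLeftRegular f)
    (hz : z ∈ Subalgebra.center K A) (hu : z = u * (f - 1)) : z = 0 := by
  classical
  have hcomm := Subalgebra.mem_center_iff.1 hz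
  let _ := (adWeightSpace_isInternal hs hweight).chooseDecomposition
  let _ : GradedRing (adWeightSpace K a) := { }
  have hz0 : z ∈ adWeightSpace K a 0 := by rw [mem_adWeightSpace, hcomm, sub_self, zero_smul]
  exact eq_zero_of_eq_mul_sub_one (adWeightSpace K a)
    (not_isOfFinAddOrder_of_isAddTorsionFree hk) hf hz0 hreg (hcomm f) hu

end AdWeight

/-! ### Kernels of difference operators -/

section InvariantHull

variable {K Q : Type*} [Field K] [AddCommGroup Q] [Module K Q]

/-- The smallest `H`-stable subspace containing `W`, i.e. `K[H] • W`. -/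
def invariantHull (H : Module.End K Q) (W : Submodule K Q) : Submodule K Q :=
  sInf {P | W ≤ P ∧ P ≤ P.comap H}

variable {N H u : Module.End K Q} {W P : Submodule K Q} {c : K}

theorem invariantHull_le (hW : W ≤ P) (hP : P ≤ P.comap H) : invariantHull H W ≤ P :=
  sInf_le ⟨hW, hP⟩

theorem le_invariantHull : W ≤ invariantHull H W :=
  le_sInf fun _ hP => hP.1

theorem invariantHull_le_comap_self : invariantHull H W ≤ (invariantHull H W).comap H :=
  fun _ hx => Submodule.mem_sInf.2 fun _ hP => hP.2 (Submodule.mem_sInf.1 hx _ hP)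

theorem invariantHull_le_comap (hu : u * H = H * u + c • u)
    (hW : W ≤ (invariantHull H W).comap u) :
    invariantHull H W ≤ (invariantHull H W).comap u :=
  invariantHull_le hW fun x hx => by
    have huH : u (H x) = H (u x) + c • u x := LinearMap.congr_fun hu x
    rw [Submodule.mem_comap, Submodule.mem_comap, huH]
    exact add_mem (invariantHull_le_comap_self hx) (Submodule.smul_mem _ c hx)

theorem apply_apply_of_mul_eq (hNH : N * H = H * N + c • (N + 1)) (m : Q) :
    N (H m) = H (N m) + c • (N m + m) :=
  LinearMap.congr_fun hNH m

theorem maxGenEigenspace_zero_le_comap (hNH : N * H = H * N + c • (N + 1)) :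
    N.maxGenEigenspace 0 ≤ (N.maxGenEigenspace 0).comap H := by
  have hpow (n : ℕ) : ∀ m, (N ^ n) m = 0 → (N ^ (n + 1)) (H m) = 0 := by
    induction n with
    | zero => intro m hm; rw [show m = 0 from hm, map_zero, map_zero]
    | succ n ih =>
      intro m hm
      have hNm : (N ^ (n + 1)) (N m) = 0 := by
        rw [← Module.End.mul_apply, ← pow_succ, pow_succ', Module.End.mul_apply, hm, map_zero]
      rw [pow_succ, Module.End.mul_apply, apply_apply_of_mul_eq hNH, map_add, map_smul, map_add,
        hm, hNm, ih (N m) (by rwa [← Module.End.mul_apply, ← pow_succ])]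
      simp
  intro m hm
  rw [Submodule.mem_comap]
  rw [Module.End.mem_maxGenEigenspace, zero_smul, sub_zero] at hm ⊢
  obtain ⟨n, hn⟩ := hm
  exact ⟨n + 1, hpow n m hn⟩

-- Applying `N` turns the equation for `m` into one of the same shape for `N m`, with `k + 1`.
theorem eq_zero_of_pow_apply_eq_zero [CharZero K] (hc : c ≠ 0)
    (hNH : N * H = H * N + c • (N + 1)) {n : ℕ} :
    ∀ {m : Q} (a : K) (k : ℕ), (N ^ n) m = 0 →
      N (H m) + a • N m + (c * k) • m = 0 → m = 0 := by
  induction n with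
  | zero => intro m a k hm _; exact hm
  | succ n ih =>
    intro m a k hm h
    have hHN : H (N m) + (a + c) • N m + (c * (k + 1 : ℕ)) • m = 0 := by
      rw [← h, apply_apply_of_mul_eq hNH]; push_cast; module
    have hNm : N m = 0 := by
      refine ih (a + c) (k + 1) (by rwa [← Module.End.mul_apply, ← pow_succ]) ?_
      simpa only [map_add, map_smul, map_zero] using congrArg N hHN
    rw [hNm, map_zero, smul_zero, zero_add, zero_add, smul_eq_zero] at hHN
    exact hHN.resolve_left (mul_ne_zero hc (Nat.cast_ne_zero.2 k.succ_ne_zero))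

theorem mem_of_mem_invariantHull [CharZero K] (hc : c ≠ 0) (hNH : N * H = H * N + c • (N + 1))
    (hW : ∀ v ∈ W, N v = 0) {x : Q} (hx : x ∈ invariantHull H W) (hNx : N x = 0) : x ∈ W := by
  set G := N.maxGenEigenspace 0
  have hWG : W ≤ G := fun v hv =>
    Module.End.mem_maxGenEigenspace _ _ _ |>.2 ⟨1, by simpa using hW v hv⟩
  have hGH : G.map H ≤ G := Submodule.map_le_iff_le_comap.2 (maxGenEigenspace_zero_le_comap hNH)
  have hull : invariantHull H W ≤ W ⊔ G.map H :=
    invariantHull_le le_sup_left fun y hy =>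
      Submodule.mem_sup_right (Submodule.mem_map_of_mem (sup_le hWG hGH hy))
  obtain ⟨v, hv, _, ⟨g, hg, rfl⟩, rfl⟩ := Submodule.mem_sup.1 (hull hx)
  obtain ⟨n, hn⟩ := (Module.End.mem_maxGenEigenspace _ _ _).1 hg
  rw [zero_smul, sub_zero] at hn
  have hg0 : g = 0 := eq_zero_of_pow_apply_eq_zero hc hNH 0 0 hn (by simpa [hW v hv] using hNx)
  simpa [hg0] using hv

end InvariantHull

/-! ### Whittaker vectors -/

section Stable

variable {K U Q : Type*} [Field K] [Ring U] [Algebra K U] [AddCommGroup Q] [Module U Q]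

theorem smul_comm_of_mem_center {z : U} (hz : z ∈ Subalgebra.center K U) (u : U) (v : Q) :
    u • z • v = z • u • v := by
  rw [← mul_smul, ← mul_smul, Subalgebra.mem_center_iff.1 hz]

theorem smul_mem_span_of_le_center {S : Subalgebra K U} (hS : S ≤ Subalgebra.center K U)
    {X : Set Q} {u : U} (hu : ∀ x ∈ X, u • x ∈ Submodule.span S X) {y : Q}
    (hy : y ∈ Submodule.span S X) : u • y ∈ Submodule.span S X := by
  induction hy using Submodule.span_induction with
  | mem x hx => exact hu x hx
  | zero => rw [smul_zero]; exact zero_mem _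
  | add x y _ _ hx hy => rw [smul_add]; exact add_mem hx hy
  | smul a x _ hx =>
    rw [Subalgebra.smul_def, smul_comm_of_mem_center (hS a.2)]
    exact Submodule.smul_mem _ a hx

variable [Module K Q] [IsScalarTower K U Q]

theorem smul_mem_of_mem_adjoin {s : Set U} {P : Submodule K Q}
    (hs : ∀ g ∈ s, ∀ x ∈ P, g • x ∈ P) {u : U} (hu : u ∈ Algebra.adjoin K s) {x : Q}
    (hx : x ∈ P) : u • x ∈ P := by
  induction hu using Algebra.adjoin_induction generalizing x with
  | mem g hg => exact hs g hg x hx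
  | algebraMap k => rw [algebraMap_smul]; exact P.smul_mem k hx
  | add u v _ _ hu hv => rw [add_smul]; exact add_mem (hu hx) (hv hx)
  | mul u v _ _ hu hv => rw [mul_smul]; exact hu (hv hx)

end Stable

namespace OspRelations

/-- The subalgebra generated by the `h i`, the sCasimir and `F`. It centralizes `f`, and its
elements will represent all of `U(g₀, e)`. -/
def whittakerSubalgebra (K : Type*) {ι U : Type*} [Field K] [Ring U] [Algebra K U] (h : ι → U)
    (H E F : U) : Subalgebra K U :=
  Algebra.adjoin K (Set.range h ∪ {sCasimir H E F, F})

/-- The orbit of `w` under `whittakerSubalgebra K h H E F`. -/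
def whittakerSpan (K : Type*) {ι U Q : Type*} [Field K] [Ring U] [Algebra K U] [AddCommGroup Q]
    [Module K Q] [Module U Q] [IsScalarTower K U Q] (h : ι → U) (H E F : U) (w : Q) :
    Submodule K Q :=
  (whittakerSubalgebra K h H E F).toSubmodule.map
    ((LinearMap.toSpanSingleton U Q w).restrictScalars K)

section

variable {K ι U Q : Type*} [Field K] [Ring U] [Algebra K U] [AddCommGroup Q]
  [Module K Q] [Module U Q] [IsScalarTower K U Q] {h : ι → U} {e H f E F : U} {v w : Q}

theorem commute_f_of_mem_whittakerSubalgebra (R : OspRelations h e H f E F) {a : U}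
    (ha : a ∈ whittakerSubalgebra K h H E F) : Commute f a := by
  refine (Algebra.adjoin_le (S := Subalgebra.centralizer K {f}) ?_ ha) f rfl
  rintro _ (⟨i, rfl⟩ | rfl | rfl) _ rfl
  · rw [R.f_eq_neg]
    exact ((R.h_F i).mul_right (R.h_F i)).neg_right.eq.symm
  · exact R.commute_sCasimir_f.eq.symm
  · exact R.f_mul_F

theorem commute_sCasimir_H (R : OspRelations h e H f E F) : Commute (sCasimir H E F) H := by
  have hTE := R.sCasimir_mul_E
  have hTF := R.sCasimir_mul_F
  have hH := R.E_F
  rw [Commute, SemiconjBy]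
  linear_combination (norm := noncomm_ring) hTE * F - E * hTF + hTF * E - F * hTE
    - sCasimir H E F * hH + hH * sCasimir H E F

theorem F_smul_E_smul [CharZero K] (H E F : U) (v : Q) :
    F • E • v = (1 / 4 : K) • ((2 : K) • H • v + v - sCasimir H E F • v) := by
  have hFE : (4 : K) • (F * E) = (2 : K) • H + 1 - sCasimir H E F := by
    simp only [sCasimir, ofNat_smul_eq_nsmul, nsmul_eq_mul, Nat.cast_ofNat, sub_sub_cancel]
  rw [one_div, eq_inv_smul_iff₀ (OfNat.ofNat_ne_zero 4 : (4 : K) ≠ 0), ← mul_smul, ← smul_assoc,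
    hFE, sub_smul, add_smul, one_smul, smul_assoc]

theorem E_smul_of_f_smul (R : OspRelations h e H f E F) (hv : f • v = v) :
    E • v = F • v - F • F • E • v := by
  have hEf : E * f = F - F * (F * E) := by
    linear_combination (norm := noncomm_ring) R.F_F * E - R.f_mul_E
  rw [← mul_smul F E, ← mul_smul F (F * E), ← sub_smul, ← hEf, mul_smul, hv]

theorem f_smul_of_mem_whittakerSpan (R : OspRelations h e H f E F) (hw : f • w = w)
    (hv : v ∈ whittakerSpan K h H E F w) : f • v = v := by
  obtain ⟨a, ha, rfl⟩ := hv
  change f • a • w = a • w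
  rw [← mul_smul, (R.commute_f_of_mem_whittakerSubalgebra ha).eq, mul_smul, hw]

theorem smul_mem_invariantHull_of_mem (R : OspRelations h e H f E F) {a : U}
    (ha : a ∈ Set.range h ∪ {sCasimir H E F, F}) {x : Q}
    (hx : x ∈ invariantHull (Algebra.lsmul K K Q H) (whittakerSpan K h H E F w)) :
    a • x ∈ invariantHull (Algebra.lsmul K K Q H) (whittakerSpan K h H E F w) := by
  obtain ⟨c, hc⟩ : ∃ c : K, a * H = H * a + c • a := by
    rcases ha with ⟨i, rfl⟩ | rfl | rfl
    · exact ⟨0, by rw [(R.commute_h_H i).eq, zero_smul, add_zero]⟩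
    · exact ⟨0, by rw [R.commute_sCasimir_H.eq, zero_smul, add_zero]⟩
    · exact ⟨1, by rw [R.H_mul_F, one_smul, sub_add_cancel]⟩
  refine invariantHull_le_comap (u := Algebra.lsmul K K Q a) (c := c) ?_ ?_ hx
  · rw [← map_mul, hc, map_add, map_mul, map_smul]
  · rintro _ ⟨b, hb, rfl⟩
    exact le_invariantHull
      ⟨a * b, Subalgebra.mul_mem _ (Algebra.subset_adjoin ha) hb, mul_smul a b w⟩

theorem E_smul_mem_invariantHull (R : OspRelations h e H f E F) [CharZero K] (hw : f • w = w)
    {x : Q} (hx : x ∈ invariantHull (Algebra.lsmul K K Q H) (whittakerSpan K h H E F w)) :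
    E • x ∈ invariantHull (Algebra.lsmul K K Q H) (whittakerSpan K h H E F w) := by
  set M := invariantHull (Algebra.lsmul K K Q H) (whittakerSpan K h H E F w)
  refine invariantHull_le_comap (u := Algebra.lsmul K K Q E) (c := -1) ?_ ?_ hx
  · rw [← map_mul, ← map_mul, ← map_smul, ← map_add, R.H_mul_E, neg_one_smul,
      add_neg_cancel_right]
  · intro v hv
    change E • v ∈ M
    have hvM : v ∈ M := le_invariantHull hv
    have F_mem {x : Q} (hx : x ∈ M) : F • x ∈ M :=
      R.smul_mem_invariantHull_of_mem (.inr (.inr rfl)) hx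
    rw [R.E_smul_of_f_smul (R.f_smul_of_mem_whittakerSpan hw hv), F_smul_E_smul (K := K) H E F]
    exact sub_mem (F_mem hvM) <| F_mem <| M.smul_mem _ <|
      sub_mem (add_mem (M.smul_mem _ (invariantHull_le_comap_self hvM)) hvM)
        (R.smul_mem_invariantHull_of_mem (.inr (.inl rfl)) hvM)

theorem smul_mem_whittakerSpan (R : OspRelations h e H f E F) [CharZero K]
    (hgen : Algebra.adjoin K (Set.range h ∪ {E, F}) = ⊤) (hw : f • w = w) {u : U}
    (hu : f • u • w = u • w) : u • w ∈ whittakerSpan K h H E F w := by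
  have hmem : u • w ∈ invariantHull (Algebra.lsmul K K Q H) (whittakerSpan K h H E F w) := by
    refine smul_mem_of_mem_adjoin (s := Set.range h ∪ {E, F}) ?_ (hgen ▸ Algebra.mem_top)
      (le_invariantHull ⟨1, Subalgebra.one_mem _, one_smul U w⟩)
    rintro a (ha | rfl | rfl) x hx
    · exact R.smul_mem_invariantHull_of_mem (.inl ha) hx
    · exact R.E_smul_mem_invariantHull hw hx
    · exact R.smul_mem_invariantHull_of_mem (by simp) hx
  refine mem_of_mem_invariantHull (N := Algebra.lsmul K K Q f - 1) (c := 2) two_ne_zero ?_ ?_ hmem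
    (sub_eq_zero.2 hu)
  · rw [sub_add_cancel, sub_mul, mul_sub, ← map_mul, ← map_mul, R.f_mul_H, add_mul, map_add,
      one_mul, mul_one, two_smul, two_mul, map_add]
    abel
  · exact fun v hv => sub_eq_zero.2 (R.f_smul_of_mem_whittakerSpan hw hv)

end

/-- The subalgebra generated by the `h i` and the Casimir element; it turns out to be the centre. -/
def centralSubalgebra (K : Type*) {ι U : Type*} [Field K] [Ring U] [Algebra K U] (h : ι → U)
    (e H f E F : U) : Subalgebra K U :=
  Algebra.adjoin K (Set.range h ∪ {casimir K e H f E F})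

section

variable {K ι U Q : Type*} [Field K] [CharZero K] [Ring U] [Algebra K U] [AddCommGroup Q]
  [Module K Q] [Module U Q] [IsScalarTower K U Q] {h : ι → U} {e H f E F : U} {v w : Q}

theorem centralSubalgebra_le_center (R : OspRelations h e H f E F)
    (hgen : Algebra.adjoin K (Set.range h ∪ {E, F}) = ⊤) :
    centralSubalgebra K h e H f E F ≤ Subalgebra.center K U := by
  refine Algebra.adjoin_le ?_
  rintro _ (⟨i, rfl⟩ | rfl)
  exacts [R.h_mem_center hgen i, R.casimir_mem_center hgen]

theorem sCasimir_sq_mem_centralSubalgebra (R : OspRelations h e H f E F) :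
    sCasimir H E F * sCasimir H E F ∈ centralSubalgebra K h e H f E F := by
  rw [R.sCasimir_sq (K := K)]
  exact add_mem (Subalgebra.smul_mem _ (Algebra.subset_adjoin (by simp)) _) (one_mem _)

theorem F_smul_sCasimir_smul (R : OspRelations h e H f E F) (v : Q) :
    F • sCasimir H E F • v = -(sCasimir H E F • F • v) := by
  rw [← mul_smul, ← mul_smul, R.sCasimir_mul_F, neg_smul, neg_neg]

theorem F_smul_F_smul (R : OspRelations h e H f E F) (hv : f • v = v) : F • F • v = -v := by
  rw [← mul_smul, R.F_F, neg_smul, hv]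

theorem whittakerSpan_le_span (R : OspRelations h e H f E F)
    (hgen : Algebra.adjoin K (Set.range h ∪ {E, F}) = ⊤) (hw : f • w = w)
    (hv : v ∈ whittakerSpan K h H E F w) :
    v ∈ Submodule.span (centralSubalgebra K h e H f E F)
      {w, sCasimir H E F • w, F • w, sCasimir H E F • F • w} := by
  obtain ⟨u, hu, rfl⟩ := hv
  set S := centralSubalgebra K h e H f E F
  set X : Set Q := {w, sCasimir H E F • w, F • w, sCasimir H E F • F • w} with hX
  have hS : S ≤ Subalgebra.center K U := R.centralSubalgebra_le_center hgen
  have mem_span {x : Q} (hx : x ∈ X) : x ∈ Submodule.span S X := Submodule.subset_span hx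
  have sq_smul_mem {x : Q} (hx : x ∈ X) :
      sCasimir H E F • sCasimir H E F • x ∈ Submodule.span S X := by
    rw [← mul_smul]
    exact Submodule.smul_mem _ (⟨_, R.sCasimir_sq_mem_centralSubalgebra⟩ : S) (mem_span hx)
  have hwX : w ∈ X := by simp [hX]
  have hTX : sCasimir H E F • w ∈ X := by simp [hX]
  have hFX : F • w ∈ X := by simp [hX]
  have hTFX : sCasimir H E F • F • w ∈ X := by simp [hX]
  refine smul_mem_of_mem_adjoin (P := (Submodule.span S X).restrictScalars K) ?_ hu (mem_span hwX)
  rintro _ (⟨i, rfl⟩ | rfl | rfl) y hy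
  · exact Submodule.smul_mem _ (⟨h i, Algebra.subset_adjoin (.inl ⟨i, rfl⟩)⟩ : S) hy
  · refine smul_mem_span_of_le_center hS ?_ hy
    simpa [hX] using ⟨mem_span hTX, sq_smul_mem hwX, mem_span hTFX, sq_smul_mem hFX⟩
  · refine smul_mem_span_of_le_center hS ?_ hy
    simpa [hX, R.F_smul_sCasimir_smul, R.F_smul_F_smul hw] using
      ⟨mem_span hFX, mem_span hTFX, mem_span hwX, mem_span hTX⟩

theorem exists_eq_smul_of_mem_whittakerSpan (R : OspRelations h e H f E F)
    (hgen : Algebra.adjoin K (Set.range h ∪ {E, F}) = ⊤) (hw : f • w = w)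
    (hv : v ∈ whittakerSpan K h H E F w) :
    ∃ a ∈ centralSubalgebra K h e H f E F, ∃ b ∈ centralSubalgebra K h e H f E F,
      ∃ c ∈ centralSubalgebra K h e H f E F, ∃ d ∈ centralSubalgebra K h e H f E F,
        v = (a + b * sCasimir H E F + c * F + d * (sCasimir H E F * F)) • w := by
  have hspan := R.whittakerSpan_le_span hgen hw hv
  simp only [Submodule.mem_span_insert, Submodule.mem_span_singleton] at hspan
  obtain ⟨a, _, ⟨b, _, ⟨c, _, ⟨d, rfl⟩, rfl⟩, rfl⟩, rfl⟩ := hspan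
  refine ⟨a, a.2, b, b.2, c, c.2, d, d.2, ?_⟩
  simp only [Subalgebra.smul_def, add_smul, mul_smul]
  abel

end

section

variable {K ι U Q : Type*} [Field K] [Ring U] [Algebra K U] [AddCommGroup Q] [IsAddTorsionFree Q]
  [Module U Q] {h : ι → U} {e H f E F a b c d : U} {w : Q}

theorem smul_eq_of_F_smul_eq (R : OspRelations h e H f E F) (hw : f • w = w)
    (ha : a ∈ Subalgebra.center K U) (hb : b ∈ Subalgebra.center K U)
    (hc : c ∈ Subalgebra.center K U) (hd : d ∈ Subalgebra.center K U)
    (hF : F • (a + b * sCasimir H E F + c * F + d * (sCasimir H E F * F)) • w =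
      (a + b * sCasimir H E F + c * F + d * (sCasimir H E F * F)) • F • w) :
    (a + b * sCasimir H E F + c * F + d * (sCasimir H E F * F)) • w = (a + c * F) • w := by
  simp only [add_smul, mul_smul, smul_add, smul_comm_of_mem_center ha F,
    smul_comm_of_mem_center hb F, smul_comm_of_mem_center hc F, smul_comm_of_mem_center hd F,
    R.F_smul_sCasimir_smul, R.F_smul_F_smul hw, smul_neg, neg_neg] at hF ⊢
  have hbd : d • sCasimir H E F • w = b • sCasimir H E F • F • w := by
    refine sub_eq_zero.1 (self_eq_neg.1 (sub_eq_zero.1 ?_))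
    rw [← sub_eq_zero.2 hF]
    abel
  have hbd' := congrArg (F • ·) hbd
  simp only [smul_comm_of_mem_center hb F, smul_comm_of_mem_center hd F,
    R.F_smul_sCasimir_smul, R.F_smul_F_smul hw, smul_neg, neg_neg] at hbd'
  rw [← hbd']
  abel

theorem smul_sCasimir_sq_smul_eq_zero (R : OspRelations h e H f E F) (hw : f • w = w)
    (ha : a ∈ Subalgebra.center K U) (hc : c ∈ Subalgebra.center K U)
    (hT : sCasimir H E F • (a + c * F) • w = (a + c * F) • sCasimir H E F • w) :
    (c * (sCasimir H E F * sCasimir H E F)) • w = 0 := by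
  simp only [add_smul, mul_smul, smul_add, smul_comm_of_mem_center ha (sCasimir H E F),
    smul_comm_of_mem_center hc (sCasimir H E F), R.F_smul_sCasimir_smul, smul_neg,
    add_right_inj] at hT
  have hcT : c • sCasimir H E F • w = 0 := by
    simpa only [smul_zero, smul_comm_of_mem_center hc F, R.F_smul_sCasimir_smul,
      R.F_smul_F_smul hw, smul_neg, neg_neg] using congrArg (F • ·) (self_eq_neg.1 hT)
  rw [mul_smul, mul_smul, ← smul_comm_of_mem_center hc, hcT, smul_zero]

end

end OspRelations

/-! ### The centre of the finite W-algebra -/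

/-- The left ideal `I_χ` generated by `f - χ(f)`, for the character `χ` of `K f` with `χ(f) = 1`. -/
def whittakerIdeal {U : Type*} [Ring U] (f : U) : Submodule U U := Submodule.span U {f - 1}

/-- The finite W-(super)algebra, as the set of `ad f`-invariants of `U ⧸ I_χ`. -/
def finiteW {U : Type*} [Ring U] (f : U) : Set (U ⧸ whittakerIdeal f) :=
  {q | ∃ y : U, Submodule.Quotient.mk y = q ∧ f * y - y * f ∈ whittakerIdeal f}

/-- The centre of `finiteW f`. The quotient by a left ideal carries no multiplication, so products
of cosets in `finiteW f` are formed through representatives. -/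
def finiteWCenter {U : Type*} [Ring U] (f : U) : Set (U ⧸ whittakerIdeal f) :=
  {q | q ∈ finiteW f ∧ ∃ y : U, Submodule.Quotient.mk y = q ∧ f * y - y * f ∈ whittakerIdeal f ∧
    ∀ y' : U, Submodule.Quotient.mk y' ∈ finiteW f →
      (Submodule.Quotient.mk (y * y') : U ⧸ whittakerIdeal f) = Submodule.Quotient.mk (y' * y)}

section FiniteW

variable {U : Type*} [Ring U] {f : U}

theorem mk_eq_smul_mk_one (u : U) :
    (Submodule.Quotient.mk u : U ⧸ whittakerIdeal f) = u • Submodule.Quotient.mk 1 := by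
  rw [← Submodule.Quotient.mk_smul, smul_eq_mul, mul_one]

theorem smul_mk_one_self :
    f • (Submodule.Quotient.mk 1 : U ⧸ whittakerIdeal f) = Submodule.Quotient.mk 1 := by
  rw [← mk_eq_smul_mk_one, Submodule.Quotient.eq]
  exact Submodule.mem_span_singleton_self _

theorem commutator_mem_whittakerIdeal_iff {y : U} : f * y - y * f ∈ whittakerIdeal f ↔
    f • (Submodule.Quotient.mk y : U ⧸ whittakerIdeal f) = Submodule.Quotient.mk y := by
  rw [← Submodule.Quotient.eq, mk_eq_smul_mk_one (f * y), mk_eq_smul_mk_one (y * f), mul_smul,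
    mul_smul, smul_mk_one_self, ← mk_eq_smul_mk_one]

theorem mk_mem_finiteW_iff {y : U} : (Submodule.Quotient.mk y : U ⧸ whittakerIdeal f) ∈ finiteW f ↔
    f • (Submodule.Quotient.mk y : U ⧸ whittakerIdeal f) = Submodule.Quotient.mk y := by
  constructor
  · rintro ⟨_, hy, hf⟩
    exact hy ▸ commutator_mem_whittakerIdeal_iff.1 hf
  · exact fun hf => ⟨y, rfl, commutator_mem_whittakerIdeal_iff.2 hf⟩

theorem mk_mem_finiteWCenter_of_mem_center {z : U} (hz : z ∈ Set.center U) :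
    Submodule.Quotient.mk z ∈ finiteWCenter f := by
  have hcomm (u : U) : u * z = z * u := ((Set.mem_center_iff.1 hz).comm u).eq.symm
  have hf : f * z - z * f ∈ whittakerIdeal f := by rw [hcomm, sub_self]; exact zero_mem _
  exact ⟨⟨z, rfl, hf⟩, z, rfl, hf, fun y _ => by rw [hcomm]⟩

theorem smul_eq_smul_of_mk_eq {u u' : U} {v : U ⧸ whittakerIdeal f}
    (hu : (Submodule.Quotient.mk u : U ⧸ whittakerIdeal f) = Submodule.Quotient.mk u')
    (hv : f • v = v) : u • v = u' • v := by
  obtain ⟨x, hx⟩ := Submodule.mem_span_singleton.1 ((Submodule.Quotient.eq _).1 hu)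
  rw [← sub_eq_zero, ← sub_smul, ← hx, smul_eq_mul, mul_smul, sub_smul, one_smul, hv, sub_self,
    smul_zero]

theorem smul_comm_of_mk_mem_finiteWCenter {u g : U}
    (hu : (Submodule.Quotient.mk u : U ⧸ whittakerIdeal f) ∈ finiteWCenter f) (hg : Commute f g) :
    g • u • (Submodule.Quotient.mk 1 : U ⧸ whittakerIdeal f) = u • g • Submodule.Quotient.mk 1 := by
  obtain ⟨-, y, hyu, -, hcomm⟩ := hu
  have hg1 : f • g • (Submodule.Quotient.mk 1 : U ⧸ whittakerIdeal f) =
      g • Submodule.Quotient.mk 1 := by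
    rw [← mul_smul, hg.eq, mul_smul, smul_mk_one_self]
  rw [← smul_eq_smul_of_mk_eq hyu hg1, ← mk_eq_smul_mk_one, ← hyu, mk_eq_smul_mk_one y,
    ← mul_smul, ← mul_smul, ← mk_eq_smul_mk_one, ← mk_eq_smul_mk_one]
  exact (hcomm g (mk_mem_finiteW_iff.2 (by rwa [mk_eq_smul_mk_one]))).symm

end FiniteW

namespace OspRelations

variable {K ι U : Type*} [Field K] [CharZero K] [Ring U] [Algebra K U] {h : ι → U} {e H f E F : U}

theorem injOn_mk_center (R : OspRelations h e H f E F)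
    (hgen : Algebra.adjoin K (Set.range h ∪ {E, F}) = ⊤) (hF : IsLeftRegular F) :
    Set.InjOn (Submodule.Quotient.mk : U → U ⧸ whittakerIdeal f) (Subalgebra.center K U) := by
  have hweight : ∀ x ∈ Set.range h ∪ {E, F}, ∃ k, x ∈ adWeightSpace K H k := by
    simp only [mem_adWeightSpace]
    rintro _ (⟨i, rfl⟩ | rfl | rfl)
    · exact ⟨0, by rw [zero_smul, (R.commute_h_H i).eq, sub_self]⟩
    · exact ⟨1, by rw [one_smul, R.H_E]⟩
    · exact ⟨-1, by rw [neg_one_smul, R.H_F]⟩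
  have hf : f ∈ adWeightSpace K H (-2) := by
    rw [mem_adWeightSpace, R.f_mul_H, add_mul, neg_smul, two_smul]
    noncomm_ring
  have hreg : IsLeftRegular f := fun x y hxy =>
    (hF.mul hF) (by simpa [R.F_F] using hxy)
  intro y hy z hz hyz
  obtain ⟨u, hu⟩ := Submodule.mem_span_singleton.1 ((Submodule.Quotient.eq _).1 hyz)
  exact sub_eq_zero.1 <| eq_zero_of_mem_center_of_eq_mul_sub_one hgen hweight (by norm_num) hf hreg
    (sub_mem hy hz) hu.symm

theorem exists_mk_eq_of_mem_finiteWCenter (R : OspRelations h e H f E F)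
    (hgen : Algebra.adjoin K (Set.range h ∪ {E, F}) = ⊤) (hF : IsLeftRegular F)
    (hT : IsLeftRegular (sCasimir H E F)) {q : U ⧸ whittakerIdeal f} (hq : q ∈ finiteWCenter f) :
    ∃ a ∈ centralSubalgebra K h e H f E F, Submodule.Quotient.mk a = q := by
  obtain ⟨y, rfl⟩ := Submodule.Quotient.mk_surjective _ q
  set w : U ⧸ whittakerIdeal f := Submodule.Quotient.mk 1
  have hw : f • w = w := smul_mk_one_self
  have hfy : f • y • w = y • w := by
    simpa only [mk_eq_smul_mk_one y] using mk_mem_finiteW_iff.1 hq.1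
  obtain ⟨a, ha, b, hb, c, hc, d, hd, hy⟩ := R.exists_eq_smul_of_mem_whittakerSpan hgen hw
    (R.smul_mem_whittakerSpan hgen hw hfy)
  have smul_comm_of {g u : U} (hg : Commute f g) (hu : y • w = u • w) :
      g • u • w = u • g • w :=
    smul_comm_of_mk_mem_finiteWCenter (by rwa [mk_eq_smul_mk_one u, ← hu, ← mk_eq_smul_mk_one]) hg
  have hS := R.centralSubalgebra_le_center hgen
  have := IsAddTorsionFree.of_isTorsionFree K (U ⧸ whittakerIdeal f)
  have hac : y • w = (a + c * F) • w :=
    hy.trans <| R.smul_eq_of_F_smul_eq hw (hS ha) (hS hb) (hS hc) (hS hd)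
      (smul_comm_of R.f_mul_F hy)
  have hcTT := R.smul_sCasimir_sq_smul_eq_zero hw (hS ha) (hS hc)
    (smul_comm_of R.commute_sCasimir_f.symm hac)
  have hcTT0 : c * (sCasimir H E F * sCasimir H E F) = 0 :=
    R.injOn_mk_center hgen hF (hS (mul_mem hc R.sCasimir_sq_mem_centralSubalgebra)) (zero_mem _)
      (by rw [mk_eq_smul_mk_one, hcTT, Submodule.Quotient.mk_zero])
  have hc0 : c = 0 := (hT.mul hT) <| by
    change _ * c = _ * 0
    rw [Subalgebra.mem_center_iff.1 (hS hc), hcTT0, mul_zero]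
  refine ⟨a, ha, ?_⟩
  rw [mk_eq_smul_mk_one, mk_eq_smul_mk_one y, hac, hc0, zero_mul, add_zero]

theorem finiteWCenter_eq_image (R : OspRelations h e H f E F)
    (hgen : Algebra.adjoin K (Set.range h ∪ {E, F}) = ⊤) (hF : IsLeftRegular F)
    (hT : IsLeftRegular (sCasimir H E F)) :
    finiteWCenter f = Submodule.Quotient.mk '' (centralSubalgebra K h e H f E F : Set U) := by
  refine Set.Subset.antisymm (fun q hq => R.exists_mk_eq_of_mem_finiteWCenter hgen hF hT hq) ?_
  rintro _ ⟨a, ha, rfl⟩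
  exact mk_mem_finiteWCenter_of_mem_center (R.centralSubalgebra_le_center hgen ha)

theorem bijOn_mk_center (R : OspRelations h e H f E F)
    (hgen : Algebra.adjoin K (Set.range h ∪ {E, F}) = ⊤) (hF : IsLeftRegular F)
    (hT : IsLeftRegular (sCasimir H E F)) :
    Set.BijOn (Submodule.Quotient.mk : U → U ⧸ whittakerIdeal f) (Subalgebra.center K U)
      (finiteWCenter f) := by
  refine ⟨fun z hz => mk_mem_finiteWCenter_of_mem_center hz, R.injOn_mk_center hgen hF, ?_⟩
  rw [R.finiteWCenter_eq_image (K := K) hgen hF hT]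
  exact Set.image_mono (R.centralSubalgebra_le_center hgen)

end OspRelations

/-! ### Regularity from the PBW basis -/

section LeadingTerm

variable {R M N ι κ α : Type*} [CommRing R] [NoZeroDivisors R] [AddCommGroup M] [Module R M]
  [AddCommGroup N] [Module R N] [LinearOrder α]

theorem injective_of_leading_term (b : Module.Basis ι R M) (c : Module.Basis κ R N) {L : M →ₗ[R] N}
    {a : ι → R} (ha : ∀ i, a i ≠ 0) {σ : ι → κ} (hσ : σ.Injective) (deg : κ → α)
    (hL : ∀ i, L (b i) - a i • c (σ i) ∈
      Submodule.span R (c '' {k | deg k < deg (σ i)})) :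
    Function.Injective L := by
  refine (injective_iff_map_eq_zero L).2 fun x hLx => ?_
  by_contra hx
  obtain ⟨i, hi, hmax⟩ := (b.repr x).support.exists_max_image (fun i => deg (σ i))
    (Finsupp.support_nonempty_iff.2 fun h => hx (b.repr.map_eq_zero_iff.1 h))
  have hcoeff (j : ι) (hj : j ∈ (b.repr x).support) :
      c.repr (L (b j)) (σ i) = a j * c.repr (c (σ j)) (σ i) := by
    have hsupp := c.mem_span_image.1 (hL j)
    have h0 : c.repr (L (b j) - a j • c (σ j)) (σ i) = 0 :=
      Finsupp.notMem_support_iff.1 fun h => (hsupp h).not_ge (hmax j hj)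
    simpa [sub_eq_zero, -Module.Basis.repr_self] using h0
  have hcoeff_x : c.repr (L x) (σ i) = b.repr x i * a i := by
    conv_lhs => rw [← b.linearCombination_repr x, Finsupp.linearCombination_apply, Finsupp.sum]
    rw [map_sum, map_sum, Finsupp.finsetSum_apply, Finset.sum_eq_single_of_mem i hi]
    · simp [hcoeff i hi]
    · intro j hj hji
      simp [hcoeff j hj, hσ.ne hji]
  rw [hLx, map_zero, Finsupp.zero_apply] at hcoeff_x
  exact mul_ne_zero (Finsupp.mem_support_iff.1 hi) (ha i) hcoeff_x.symm

end LeadingTerm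

theorem mul_aeval_mul_mem {R A : Type*} [CommRing R] [Ring A] [Algebra R A] {P : Submodule R A}
    {x y z : A} {n : ℕ} (hP : ∀ k ≤ n, x * z ^ k * y ∈ P) {p : Polynomial R}
    (hp : p.natDegree ≤ n) : x * Polynomial.aeval z p * y ∈ P := by
  rw [Polynomial.aeval_eq_sum_range, Finset.mul_sum, Finset.sum_mul]
  refine sum_mem fun k hk => ?_
  rw [mul_smul_comm, smul_mul_assoc]
  exact P.smul_mem _ (hP k ((Finset.mem_range_succ_iff.1 hk).trans hp))

section Monomial

variable {U : Type} [Ring U] {n : ℕ}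

/-- The monomials of the PBW basis of `U(g₀)` for the ordered basis `f, F, h i, H, e, E`. -/
def pbwMonomial (h : Fin n → U) (e H f E F : U)
    (z : ℕ × Fin 2 × (Fin n → ℕ) × ℕ × ℕ × Fin 2) : U :=
  f ^ z.1 * F ^ (z.2.1 : ℕ) * ringProd (fun i => h i ^ z.2.2.1 i) *
    H ^ z.2.2.2.1 * e ^ z.2.2.2.2.1 * E ^ (z.2.2.2.2.2 : ℕ)

/-- The PBW monomials up to sign: `f = -F ^ 2` and `e = E ^ 2` are absorbed in the powers of `F` and
`E`, which removes the exponents restricted to `0` and `1`. -/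
def ospMonomial (h : Fin n → U) (H E F : U) (z : ℕ × (Fin n → ℕ) × ℕ × ℕ) : U :=
  F ^ z.1 * ringProd (fun i => h i ^ z.2.1 i) * H ^ z.2.2.1 * E ^ z.2.2.2

/-- The reindexing `(a, ε, t, m, b, δ) ↦ (2 * a + ε, t, m, 2 * b + δ)` from `pbwMonomial` to
`ospMonomial`. -/
def pbwIndexEquiv (n : ℕ) :
    ℕ × Fin 2 × (Fin n → ℕ) × ℕ × ℕ × Fin 2 ≃ ℕ × (Fin n → ℕ) × ℕ × ℕ :=
  (Equiv.prodAssoc _ _ _).symm.trans <| (Nat.divModEquiv 2).symm.prodCongr <|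
    (Equiv.refl _).prodCongr <| (Equiv.refl _).prodCongr (Nat.divModEquiv 2).symm

theorem ringProd_pow_mem {S : Type*} [SetLike S U] [SubmonoidClass S U] {s : S} {h : Fin n → U}
    (hh : ∀ i, h i ∈ s) (t : Fin n → ℕ) : ringProd (fun i => h i ^ t i) ∈ s :=
  list_prod_mem fun _ hx => by
    obtain ⟨i, rfl⟩ := (List.mem_ofFn' _ _).1 hx
    exact pow_mem (hh i) _

theorem commute_ringProd_pow {h : Fin n → U} {x : U} (hx : ∀ i, Commute x (h i)) (t : Fin n → ℕ) :
    Commute x (ringProd fun i => h i ^ t i) :=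
  ringProd_pow_mem (s := Submonoid.centralizer {x}) (by rintro i _ rfl; exact hx i) t x rfl

theorem isLeftRegular_F_of_basis {K : Type*} [Field K] [Algebra K U] {h : Fin n → U} {H E F : U}
    {b : Module.Basis (ℕ × (Fin n → ℕ) × ℕ × ℕ) K U} (hb : ⇑b = ospMonomial h H E F) :
    IsLeftRegular F := by
  refine injective_of_leading_term b b (L := LinearMap.mulLeft K F) (a := 1)
    (σ := fun z => (z.1 + 1, z.2)) (fun _ => one_ne_zero) (fun x y hxy => ?_) (fun z => z.1)
    fun z => ?_
  · simpa [Prod.ext_iff] using hxy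
  · simp [hb, ospMonomial, pow_succ', mul_assoc]

end Monomial

namespace OspRelations

variable {K : Type*} {U : Type} [Field K] [Ring U] [Algebra K U] {n : ℕ} {h : Fin n → U}
  {e H f E F : U}

theorem ospMonomial_pbwIndexEquiv (R : OspRelations h e H f E F)
    (z : ℕ × Fin 2 × (Fin n → ℕ) × ℕ × ℕ × Fin 2) :
    ospMonomial h H E F (pbwIndexEquiv n z) = ((-1 : Kˣ) ^ z.1) • pbwMonomial h e H f E F z := by
  obtain ⟨a, ε, t, m, b, δ⟩ := z
  have hF : F ^ (2 * a + (ε : ℕ)) = (-1 : K) ^ a • (f ^ a * F ^ (ε : ℕ)) := by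
    rw [pow_add, pow_mul, pow_two, R.F_F, ← neg_one_smul K, smul_pow, smul_mul_assoc]
  have hE : E ^ (2 * b + (δ : ℕ)) = e ^ b * E ^ (δ : ℕ) := by
    rw [pow_add, pow_mul, pow_two, R.E_E]
  change F ^ (a * 2 + (ε : ℕ)) * ringProd (fun i => h i ^ t i) * H ^ m *
    E ^ (b * 2 + (δ : ℕ)) = _
  rw [mul_comm a, mul_comm b, hF, hE, Units.smul_def]
  simp only [pbwMonomial, smul_mul_assoc, mul_assoc, Units.val_pow_eq_pow_val, Units.val_neg,
    Units.val_one]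

theorem exists_basis_ospMonomial (R : OspRelations h e H f E F)
    (hindep : LinearIndependent K (pbwMonomial h e H f E F))
    (hspan : Submodule.span K (Set.range (pbwMonomial h e H f E F)) = ⊤) :
    ∃ b : Module.Basis (ℕ × (Fin n → ℕ) × ℕ × ℕ) K U, ⇑b = ospMonomial h H E F := by
  refine ⟨((Module.Basis.mk hindep hspan.ge).unitsSMul fun z => (-1) ^ z.1).reindex
    (pbwIndexEquiv n), ?_⟩
  rw [← (pbwIndexEquiv n).surjective.injective_comp_right.eq_iff]
  ext z
  simp [R.ospMonomial_pbwIndexEquiv (K := K), Module.Basis.unitsSMul_apply]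

variable {b : Module.Basis (ℕ × (Fin n → ℕ) × ℕ × ℕ) K U}

theorem adjoin_eq_top_of_basis (R : OspRelations h e H f E F) (hb : ⇑b = ospMonomial h H E F) :
    Algebra.adjoin K (Set.range h ∪ {E, F}) = ⊤ := by
  set S := Algebra.adjoin K (Set.range h ∪ {E, F})
  have h_mem (i : Fin n) : h i ∈ S := Algebra.subset_adjoin (.inl ⟨i, rfl⟩)
  have E_mem : E ∈ S := Algebra.subset_adjoin (by simp)
  have F_mem : F ∈ S := Algebra.subset_adjoin (by simp)
  have H_mem : H ∈ S := R.E_F ▸ add_mem (mul_mem E_mem F_mem) (mul_mem F_mem E_mem)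
  rw [← Algebra.toSubmodule_eq_top, eq_top_iff, ← b.span_eq, Submodule.span_le, hb]
  rintro _ ⟨z, rfl⟩
  change _ ∈ S
  exact mul_mem (mul_mem (mul_mem (pow_mem F_mem _) (ringProd_pow_mem h_mem _))
    (pow_mem H_mem _)) (pow_mem E_mem _)

theorem sCasimir_mul_F_pow (R : OspRelations h e H f E F) (c : ℕ) :
    sCasimir H E F * F ^ c = (-1 : K) ^ c • (F ^ c * sCasimir H E F) := by
  induction c with
  | zero => simp
  | succ c ih =>
    rw [pow_succ, ← mul_assoc, ih, smul_mul_assoc, mul_assoc, R.sCasimir_mul_F, pow_succ,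
      mul_smul, neg_one_smul, mul_neg, mul_assoc]

theorem H_pow_mul_F (R : OspRelations h e H f E F) (m : ℕ) : H ^ m * F = F * (H - 1) ^ m := by
  have hHF : SemiconjBy F (H - 1) H := by rw [SemiconjBy, R.H_mul_F, mul_sub, mul_one]
  exact (hHF.pow_right m).symm

theorem sCasimir_mul_ospMonomial (R : OspRelations h e H f E F) (c : ℕ) (t : Fin n → ℕ)
    (m d : ℕ) :
    sCasimir H E F * ospMonomial h H E F (c, t, m, d) =
      (-1 : K) ^ c • ((2 : K) • ospMonomial h H E F (c, t, m + 1, d) +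
        ospMonomial h H E F (c, t, m, d) -
        (4 : K) • (F ^ (c + 1) * ringProd (fun i => h i ^ t i) * (H - 1) ^ m * E ^ (d + 1))) := by
  set P := ringProd fun i => h i ^ t i with hP
  have hTP : Commute (sCasimir H E F) P :=
    commute_ringProd_pow (fun i => (R.commute_h_sCasimir i).symm) t
  have hFP : Commute F P := commute_ringProd_pow (fun i => (R.h_F i).symm) t
  have hTH : Commute (sCasimir H E F) (H ^ m) := R.commute_sCasimir_H.pow_right m
  have hHT : H ^ m * sCasimir H E F =
      (2 : K) • H ^ (m + 1) + H ^ m - (4 : K) • (F * (H - 1) ^ m * E) := by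
    simp only [← R.H_pow_mul_F, sCasimir, pow_succ, ofNat_smul_eq_nsmul, nsmul_eq_mul,
      Nat.cast_ofNat]
    noncomm_ring
  calc sCasimir H E F * (F ^ c * P * H ^ m * E ^ d)
      = (-1 : K) ^ c • (F ^ c * P * (H ^ m * sCasimir H E F) * E ^ d) := by
        simp only [← mul_assoc, R.sCasimir_mul_F_pow (K := K), smul_mul_assoc]
        rw [mul_assoc (F ^ c), hTP.eq, ← mul_assoc, mul_assoc _ _ (H ^ m), hTH.eq, ← mul_assoc]
    _ = _ := by
        rw [hHT, ospMonomial, ospMonomial, ← hP, pow_succ F, mul_assoc _ F P, hFP.eq, pow_succ' E]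
        simp only [mul_add, mul_sub, add_mul, sub_mul, mul_smul_comm, smul_mul_assoc, mul_assoc]

theorem isLeftRegular_sCasimir_of_basis [CharZero K] (R : OspRelations h e H f E F)
    (hb : ⇑b = ospMonomial h H E F) : IsLeftRegular (sCasimir H E F) := by
  refine injective_of_leading_term b b (L := LinearMap.mulLeft K (sCasimir H E F))
    (a := fun z => (-1) ^ z.1 * 2) (σ := fun z => (z.1, z.2.1, z.2.2.1 + 1, z.2.2.2))
    (fun _ => by simp) (fun x y hxy => ?_) (fun z => z.2.2.1) ?_
  · simpa [Prod.ext_iff] using hxy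
  rintro ⟨c, t, m, d⟩
  set lower := Submodule.span K (b '' {z | z.2.2.1 < m + 1})
  have mem_lower {c' d' k : ℕ} (hk : k ≤ m) : ospMonomial h H E F (c', t, k, d') ∈ lower :=
    Submodule.subset_span ⟨_, Nat.lt_succ_of_le hk, congrFun hb _⟩
  have hsub : (H - 1) ^ m = Polynomial.aeval H ((Polynomial.X - 1 : Polynomial K) ^ m) := by simp
  have mem_lower' : F ^ (c + 1) * ringProd (fun i => h i ^ t i) * (H - 1) ^ m * E ^ (d + 1) ∈
      lower := by
    rw [hsub]
    exact mul_aeval_mul_mem (fun k hk => mem_lower hk) (by compute_degree)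
  rw [LinearMap.mulLeft_apply, hb, R.sCasimir_mul_ospMonomial (K := K), mul_smul, ← smul_sub,
    add_sub_assoc, add_sub_cancel_left]
  exact lower.smul_mem _ (sub_mem (mem_lower le_rfl) (lower.smul_mem _ mem_lower'))

end OspRelations

/-! ### Generators of the centre -/

theorem toSubmodule_adjoin_range_union_singleton {R A ι : Type*} [CommRing R] [CommRing A]
    [Algebra R A] [Fintype ι] (h : ι → A) (c : A) :
    (Algebra.adjoin R (Set.range h ∪ {c})).toSubmodule =
      Submodule.span R (Set.range fun z : (ι → ℕ) × ℕ => (∏ i, h i ^ z.1 i) * c ^ z.2) := by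
  rw [Algebra.adjoin_eq_span]
  congr 1
  refine Set.Subset.antisymm (fun x hx => ?_) ?_
  · rw [SetLike.mem_coe, Submonoid.closure_union, Submonoid.mem_sup] at hx
    obtain ⟨y, hy, z, hz, rfl⟩ := hx
    obtain ⟨t, rfl⟩ := Submonoid.exists_of_mem_closure_range h y hy
    obtain ⟨k, rfl⟩ := Submonoid.mem_closure_singleton.1 hz
    exact ⟨(t, k), rfl⟩
  · rintro _ ⟨z, rfl⟩
    exact mul_mem (prod_mem fun i _ => pow_mem (Submonoid.subset_closure (by simp)) _)
      (pow_mem (Submonoid.subset_closure (by simp)) _)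

/-- The representative `2e + ½h² - (3/2)h + FE` of `C′_θ` in `U(g₀)`, congruent to `casimir` modulo
`whittakerIdeal f`. -/
def whittakerCasimir (K : Type*) [Field K] {U : Type*} [Ring U] [Algebra K U] (e H E F : U) : U :=
  (2 : K) • e + (1 / 2 : K) • (H * H) - (3 / 2 : K) • H + F * E

namespace OspRelations

section

variable {K : Type*} {U : Type} [Field K] [CharZero K] [Ring U] [Algebra K U] {n : ℕ}
  {h : Fin n → U} {e H f E F : U}

theorem toSubmodule_centralSubalgebra (R : OspRelations h e H f E F)
    (hgen : Algebra.adjoin K (Set.range h ∪ {E, F}) = ⊤) :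
    (centralSubalgebra K h e H f E F).toSubmodule = Submodule.span K (Set.range
      fun z : (Fin n → ℕ) × ℕ => ringProd (fun i => h i ^ z.1 i) * casimir K e H f E F ^ z.2) := by
  let Z := Subalgebra.center K U
  let h' (i : Fin n) : Z := ⟨h i, R.h_mem_center hgen i⟩
  let c' : Z := ⟨casimir K e H f E F, R.casimir_mem_center hgen⟩
  have hmap : centralSubalgebra K h e H f E F =
      (Algebra.adjoin K (Set.range h' ∪ {c'})).map Z.val := by
    rw [AlgHom.map_adjoin, Set.image_union, Set.image_singleton, ← Set.range_comp]
    rfl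
  have hprod (t : Fin n → ℕ) : Z.val (∏ i, h' i ^ t i) = ringProd fun i => h i ^ t i := by
    rw [← List.prod_ofFn, map_list_prod, List.map_ofFn]
    rfl
  rw [hmap, Subalgebra.map_toSubmodule, toSubmodule_adjoin_range_union_singleton,
    Submodule.map_span, ← Set.range_comp]
  congr 2
  ext z
  simp [← hprod, c']

theorem casimir_pow_smul_mk_one (R : OspRelations h e H f E F)
    (hgen : Algebra.adjoin K (Set.range h ∪ {E, F}) = ⊤) (k : ℕ) :
    whittakerCasimir K e H E F ^ k • (Submodule.Quotient.mk 1 : U ⧸ whittakerIdeal f) =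
      casimir K e H f E F ^ k • Submodule.Quotient.mk 1 := by
  set w : U ⧸ whittakerIdeal f := Submodule.Quotient.mk 1
  have hw : whittakerCasimir K e H E F • w = casimir K e H f E F • w := by
    simp only [whittakerCasimir, casimir, add_smul, sub_smul, ← smul_mul_assoc, mul_smul]
    rw [show f • w = w from smul_mk_one_self]
  induction k with
  | zero => rw [pow_zero, pow_zero]
  | succ k ih =>
    rw [pow_succ, mul_smul, hw, smul_comm_of_mem_center (R.casimir_mem_center hgen), ih, pow_succ',
      mul_smul]

theorem finiteWCenter_eq_span (R : OspRelations h e H f E F)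
    (hgen : Algebra.adjoin K (Set.range h ∪ {E, F}) = ⊤) (hF : IsLeftRegular F)
    (hT : IsLeftRegular (sCasimir H E F)) :
    finiteWCenter f = (Submodule.span K (Set.range fun z : (Fin n → ℕ) × ℕ =>
      (Submodule.Quotient.mk (ringProd (fun i => h i ^ z.1 i) * whittakerCasimir K e H E F ^ z.2) :
        U ⧸ whittakerIdeal f)) : Set (U ⧸ whittakerIdeal f)) := by
  have hmk (z : (Fin n → ℕ) × ℕ) : (Submodule.Quotient.mk (ringProd (fun i => h i ^ z.1 i) *
      whittakerCasimir K e H E F ^ z.2) : U ⧸ whittakerIdeal f) =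
        Submodule.Quotient.mk (ringProd (fun i => h i ^ z.1 i) * casimir K e H f E F ^ z.2) := by
    rw [mk_eq_smul_mk_one, mul_smul, R.casimir_pow_smul_mk_one hgen, ← mul_smul,
      ← mk_eq_smul_mk_one]
  have hmap := congrArg (Submodule.map ((whittakerIdeal f).mkQ.restrictScalars K))
    (R.toSubmodule_centralSubalgebra hgen)
  rw [Submodule.map_span, ← Set.range_comp] at hmap
  rw [R.finiteWCenter_eq_image (K := K) hgen hF hT, funext hmk]
  exact congrArg SetLike.coe hmap

end

theorem of_two_smul {K ι U : Type*} [Field K] [CharZero K] [Ring U] [Algebra K U] {h : ι → U}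
    {e H f E F : U} (hHE : H * E - E * H = E) (hHF : H * F - F * H = -F) (hEF : E * F + F * E = H)
    (hEE : E * E + E * E = (2 : K) • e) (hFF : F * F + F * F = (-2 : K) • f)
    (hhE : ∀ i, Commute (h i) E) (hhF : ∀ i, Commute (h i) F) (hhh : ∀ i j, Commute (h i) (h j)) :
    OspRelations h e H f E F where
  H_E := hHE
  H_F := hHF
  E_F := hEF
  E_E := smul_right_injective U (two_ne_zero' K) ((two_smul K _).trans hEE)
  F_F := smul_right_injective U (two_ne_zero' K) <|
    (two_smul K _).trans <| hFF.trans (by rw [neg_smul]; exact (smul_neg _ _).symm)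
  h_E := hhE
  h_F := hhF
  h_h := hhh

end OspRelations

theorem stmt15_center_of_Ug0e_general {K : Type*} {U : Type} [Field K] [CharZero K] [Ring U]
    [Algebra K U] {n : ℕ} {h : Fin n → U} {e H f E F : U} (R : OspRelations h e H f E F)
    (hindep : LinearIndependent K (pbwMonomial h e H f E F))
    (hspan : Submodule.span K (Set.range (pbwMonomial h e H f E F)) = ⊤) :
    finiteWCenter f = (Submodule.span K (Set.range fun z : (Fin n → ℕ) × ℕ =>
      (Submodule.Quotient.mk (ringProd (fun i => h i ^ z.1 i) * whittakerCasimir K e H E F ^ z.2) :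
        U ⧸ whittakerIdeal f)) : Set (U ⧸ whittakerIdeal f)) ∧
    Set.BijOn (Submodule.Quotient.mk : U → U ⧸ whittakerIdeal f) (Subalgebra.center K U)
      (finiteWCenter f) := by
  obtain ⟨b, hb⟩ := R.exists_basis_ospMonomial hindep hspan
  have hgen := R.adjoin_eq_top_of_basis hb
  have hF := isLeftRegular_F_of_basis hb
  have hT := R.isLeftRegular_sCasimir_of_basis hb
  exact ⟨R.finiteWCenter_eq_span hgen hF hT, R.bijOn_mk_center hgen hF hT⟩

theorem stmt15_center_of_Ug0e
    (km : ℕ)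
    -- U(g₀), the enveloping superalgebra of g₀ = h^e ⊕ s_θ, s_θ ≅ osp(1|2):
    -- ιh i, ιe, ιH, ιf, ιE, ιF are the images of the basis h_1,…,h_{k−1} of
    -- h^e and of e, h, f, E = [√−2·v_{(r+1)/2}, e], F = √−2·v_{(r+1)/2}
    (Ug0 : Type) [Ring Ug0] [Algebra ℂ Ug0]
    (ιh : Fin km → Ug0) (ιe ιH ιf ιE ιF : Ug0)
    -- the osp(1|2)-relations of Lemma `osp12genecom`
    (hhe : ιH * ιe - ιe * ιH = (2 : ℂ) • ιe)
    (hhf : ιH * ιf - ιf * ιH = (-2 : ℂ) • ιf)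
    (hef : ιe * ιf - ιf * ιe = ιH)
    (hhE : ιH * ιE - ιE * ιH = ιE)
    (hhF : ιH * ιF - ιF * ιH = - ιF)
    (heE : ιe * ιE - ιE * ιe = 0)
    (heF : ιe * ιF - ιF * ιe = - ιE)
    (hfE : ιf * ιE - ιE * ιf = - ιF)
    (hfF : ιf * ιF - ιF * ιf = 0)
    (hEE : ιE * ιE + ιE * ιE = (2 : ℂ) • ιe)
    (hEF : ιE * ιF + ιF * ιE = ιH)
    (hFF : ιF * ιF + ιF * ιF = (-2 : ℂ) • ιf)
    -- h^e is central in g₀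
    (hcen : ∀ i, ιh i * ιe = ιe * ιh i ∧ ιh i * ιH = ιH * ιh i ∧
      ιh i * ιf = ιf * ιh i ∧ ιh i * ιE = ιE * ιh i ∧ ιh i * ιF = ιF * ιh i ∧
      ∀ j, ιh i * ιh j = ιh j * ιh i)
    -- the PBW theorem for U(g₀)
    (hPBWindep : LinearIndependent ℂ
      (fun z : ℕ × Fin 2 × (Fin km → ℕ) × ℕ × ℕ × Fin 2 =>
        ιf ^ z.1 * ιF ^ (z.2.1 : ℕ) * ringProd (fun i => ιh i ^ z.2.2.1 i) *
          ιH ^ z.2.2.2.1 * ιe ^ z.2.2.2.2.1 * ιE ^ (z.2.2.2.2.2 : ℕ)))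
    (hPBWspan : Submodule.span ℂ (Set.range
      (fun z : ℕ × Fin 2 × (Fin km → ℕ) × ℕ × ℕ × Fin 2 =>
        ιf ^ z.1 * ιF ^ (z.2.1 : ℕ) * ringProd (fun i => ιh i ^ z.2.2.1 i) *
          ιH ^ z.2.2.2.1 * ιe ^ z.2.2.2.2.1 * ιE ^ (z.2.2.2.2.2 : ℕ))) = ⊤)
    -- the left ideal (I₀)_χ and the invariants U(g₀,e) ⊆ (Q₀)_χ
    (I0 : Submodule Ug0 Ug0) (hI0 : I0 = Submodule.span Ug0 {ιf - 1})
    (Inv : Set (Ug0 ⧸ I0))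
    (hInv : Inv = {q : Ug0 ⧸ I0 | ∃ y : Ug0,
      (Submodule.Quotient.mk y : Ug0 ⧸ I0) = q ∧ ιf * y - y * ιf ∈ I0})
    -- representatives of the generators Θ′_E, C′_θ, Θ′_F
    (yE yC yF : Ug0)
    (hyE : yE = ιE + (1/2 : ℂ) • (ιF * ιH) - (3/4 : ℂ) • ιF)
    (hyC : yC = (2 : ℂ) • ιe + (1/2 : ℂ) • (ιH * ιH) - (3/2 : ℂ) • ιH + ιF * ιE)
    (hyF : yF = ιF)
    -- the center of U(g₀,e): invariant cosets commuting with all of U(g₀,e)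
    (Zcen : Set (Ug0 ⧸ I0))
    (hZcen : Zcen = {q : Ug0 ⧸ I0 | q ∈ Inv ∧ ∃ y : Ug0,
      (Submodule.Quotient.mk y : Ug0 ⧸ I0) = q ∧ ιf * y - y * ιf ∈ I0 ∧
      ∀ y' : Ug0, (Submodule.Quotient.mk y' : Ug0 ⧸ I0) ∈ Inv →
        (Submodule.Quotient.mk (y * y') : Ug0 ⧸ I0) =
          Submodule.Quotient.mk (y' * y)}) :
    -- (i) Z(U(g₀,e)) is generated by the Θ′_{h_i} and C′_θ: it equals the
    --     ℂ-span of the cosets of the monomials ∏(ιh i)^{t_i}·yC^{t_k}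
    (Zcen = (Submodule.span ℂ (Set.range
        (fun z : (Fin km → ℕ) × ℕ =>
          (Submodule.Quotient.mk
            (ringProd (fun i => ιh i ^ z.1 i) * yC ^ z.2) : Ug0 ⧸ I0))) :
      Set (Ug0 ⧸ I0)))
    ∧
    -- (ii) the projection Pr₀ : U(g₀) → (Q₀)_χ maps Z(U(g₀)) bijectively onto
    --      Z(U(g₀,e))
    Set.BijOn (fun y : Ug0 => (Submodule.Quotient.mk y : Ug0 ⧸ I0))
      (Subalgebra.center ℂ Ug0 : Set Ug0) Zcen := by
  subst hI0 hInv hyC hZcen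
  exact stmt15_center_of_Ug0e_general (.of_two_smul hhE hhF hEF hEE hFF
    (fun i => (hcen i).2.2.2.1) (fun i => (hcen i).2.2.2.2.1) fun i => (hcen i).2.2.2.2.2)
    hPBWindep hPBWspan
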